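/- Let p be an odd prime and G a finite powerful p-group. Then for all i, j ≥ 1 the subgroup Ω_i(G^{p^j}) is powerful, i.e., [Ω_i(G^{p^j}), Ω_i(G^{p^j})] ≤ (Ω_i(G^{p^j}))^p. -/

import Mathlib

/-!
Everything rests on one commutator estimate in a powerful group `G` of odd parameter `n`: if
`x ∈ G^{n^{k+1}}` has order dividing `n^{i+1}` and `t` has order dividing `n^{i+k+1}`, then `⁅t, x⁆`
has order dividing `n^i`. For `x ∈ Ω_{i+1}(G^{n^{j+1}})` and `t ∈ Ω_{i+j+1}(G)` the commutator
`⁅t, x⁆` also lies in `G^{n^{j+2}}`, so it is `z^n` with `z ∈ G^{n^{j+1}}`; the estimate says that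
`z` has order dividing `n^{i+1}`.

To prove the estimate, write `x = d^n` with `d ∈ G^{n^k}` and put `c = ⁅t, d⁆`, so that `c d` is the
conjugate of `d` by `t` and `⁅t, x⁆ = (c d)^n d^{-n}`. The case `(i+1, k-1)` bounds the order of
`c`, and the case `(i, k+1)` says that `⁅d, c⁆` commutes with `c` and `d` modulo elements of order
dividing `n^i`. Hence the class-two formula `(c d)^n = c^n d^n ⁅d, c⁆^{n(n-1)/2}` applies, and its
error term is a power of `⁅d, c⁆^n`.

This presupposes that in each `⟨t⟩ G^n` the elements of order dividing `n^i` form a subgroup. These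
subgroups are again powerful, so induction on the order of `G` supplies the fact when all of them
are proper, and the estimate with `k = 0` then extends it to `G`. If `⟨t⟩ G^n = G` for some `t`,
then `G = ⟨t⟩` is cyclic.
-/

/-- The subgroup generated by the `n`-th powers of the elements of `H`. -/
def subgroupPow {G : Type*} [Group G] (H : Subgroup G) (n : ℕ) : Subgroup G :=
  Subgroup.closure {x | ∃ h ∈ H, h ^ n = x}

/-- `Ω_i(H)`: the subgroup generated by the elements of `H` whose order divides `p ^ i`. -/
def omegaSubgroup {G : Type*} [Group G] (p i : ℕ) (H : Subgroup G) : Subgroup G :=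
  Subgroup.closure {x | x ∈ H ∧ x ^ p ^ i = 1}

/-- A finite `p`-group `G` is powerful if `[G,G] ≤ G^p` when `p` is odd,
and `[G,G] ≤ G^4` when `p = 2`. -/
def IsPowerful (p : ℕ) (G : Type*) [Group G] : Prop :=
  if p = 2 then commutator G ≤ subgroupPow (⊤ : Subgroup G) 4
  else commutator G ≤ subgroupPow (⊤ : Subgroup G) p

/-- The subgroup of `n`-th powers of the whole group is normal (indeed characteristic). -/
instance subgroupPow_top_normal {G : Type*} [Group G] (n : ℕ) :
    (subgroupPow (⊤ : Subgroup G) n).Normal := by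
  constructor
  intro x hx g
  have key : Subgroup.map (MulAut.conj g).toMonoidHom (subgroupPow (⊤ : Subgroup G) n)
      ≤ subgroupPow (⊤ : Subgroup G) n := by
    rw [subgroupPow, MonoidHom.map_closure]
    apply Subgroup.closure_le _ |>.mpr
    rintro y ⟨z, ⟨h, -, rfl⟩, rfl⟩
    exact Subgroup.subset_closure ⟨(MulAut.conj g) h, trivial, by
      simp [((MulAut.conj g).toMonoidHom.map_pow h n).symm]⟩
  have hmem : (MulAut.conj g) x ∈
      Subgroup.map (MulAut.conj g).toMonoidHom (subgroupPow (⊤ : Subgroup G) n) :=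
    Subgroup.mem_map_of_mem _ hx
  simpa [MulAut.conj_apply] using key hmem

/-- A powerfully central chain `{1} = H 0 ≤ H 1 ≤ ⋯ ≤ H n = G` of length `n`:
`[H (k+1), G] ≤ (H k)^p` for all `k < n`. -/
def IsPowerfullyCentralChain (p : ℕ) {G : Type*} [Group G] (n : ℕ) (H : ℕ → Subgroup G) : Prop :=
  H 0 = ⊥ ∧ H n = ⊤ ∧ (∀ k, k < n → H k ≤ H (k + 1)) ∧
    ∀ k, k < n → ⁅H (k + 1), (⊤ : Subgroup G)⁆ ≤ subgroupPow (H k) p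

/-- A group is powerfully nilpotent if it is powerful and admits a powerfully central chain. -/
def IsPowerfullyNilpotent (p : ℕ) (G : Type*) [Group G] : Prop :=
  IsPowerful p G ∧ ∃ (n : ℕ) (H : ℕ → Subgroup G), IsPowerfullyCentralChain p n H

/-- The powerful nilpotency class: the least possible length of a powerfully central chain. -/
noncomputable def powerfulNilpotencyClass (p : ℕ) (G : Type*) [Group G] : ℕ :=
  sInf {n | ∃ H : ℕ → Subgroup G, IsPowerfullyCentralChain p n H}

open Subgroup
open scoped commutatorElement

section

variable {G : Type*} [Group G] {n : ℕ}

/-! ### Powers in groups of class two -/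

theorem pow_mul_eq_commutatorElement_pow_mul {x y : G} (hy : Commute y ⁅y, x⁆) (m : ℕ) :
    y ^ m * x = ⁅y, x⁆ ^ m * x * y ^ m := by
  have hconj : y * x * y⁻¹ = ⁅y, x⁆ * x := by rw [commutatorElement_def]; group
  induction m with
  | zero => simp
  | succ m ih =>
    calc y ^ (m + 1) * x = y * ⁅y, x⁆ ^ m * x * y ^ m := by
          rw [pow_succ', mul_assoc, ih]; group
      _ = ⁅y, x⁆ ^ m * (y * x * y⁻¹) * y * y ^ m := by rw [(hy.pow_right m).eq]; group
      _ = ⁅y, x⁆ ^ (m + 1) * x * y ^ (m + 1) := by rw [hconj, pow_succ, pow_succ' y]; group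

theorem mul_pow_eq_mul_commutatorElement_pow {x y : G} (hx : Commute x ⁅y, x⁆)
    (hy : Commute y ⁅y, x⁆) (m : ℕ) :
    (x * y) ^ m = x ^ m * y ^ m * ⁅y, x⁆ ^ m.choose 2 := by
  have hxy (a b k : ℕ) : Commute (⁅y, x⁆ ^ k) (x ^ a * y ^ b) :=
    (((hx.pow_left a).mul_left (hy.pow_left b)).pow_right k).symm
  induction m with
  | zero => simp
  | succ m ih =>
    calc (x * y) ^ (m + 1) = x ^ m * y ^ m * (⁅y, x⁆ ^ m.choose 2 * (x ^ 1 * y ^ 1)) := by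
          rw [pow_succ, ih]; group
      _ = x ^ m * (y ^ m * x) * y * ⁅y, x⁆ ^ m.choose 2 := by rw [(hxy 1 1 _).eq]; group
      _ = x ^ m * (⁅y, x⁆ ^ m * (x ^ 1 * y ^ (m + 1))) * ⁅y, x⁆ ^ m.choose 2 := by
          rw [pow_mul_eq_commutatorElement_pow_mul hy, pow_succ y]; group
      _ = x ^ (m + 1) * y ^ (m + 1) * ⁅y, x⁆ ^ (m + 1).choose 2 := by
          rw [(hxy 1 (m + 1) m).eq, Nat.choose_succ_succ' m 1, Nat.choose_one_right, pow_add,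
            pow_succ x]
          group

theorem dvd_choose_two_of_odd (hn : Odd n) : n ∣ n.choose 2 := by
  obtain ⟨k, rfl⟩ := hn
  refine ⟨k, ?_⟩
  rw [Nat.choose_two_right, Nat.add_sub_cancel, mul_left_comm, Nat.mul_div_cancel_left _ two_pos]

theorem mul_pow_of_odd (hn : Odd n) {x y : G} (hx : Commute x ⁅y, x⁆) (hy : Commute y ⁅y, x⁆)
    (hxy : ⁅y, x⁆ ^ n = 1) : (x * y) ^ n = x ^ n * y ^ n := by
  obtain ⟨m, hm⟩ := dvd_choose_two_of_odd hn
  rw [mul_pow_eq_mul_commutatorElement_pow hx hy, hm, pow_mul, hxy, one_pow, mul_one]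

theorem commutatorElement_pow_right_of_odd (hn : Odd n) {t d : G}
    (hc : Commute ⁅t, d⁆ ⁅d, ⁅t, d⁆⁆) (hd : Commute d ⁅d, ⁅t, d⁆⁆) (hdc : ⁅d, ⁅t, d⁆⁆ ^ n = 1) :
    ⁅t, d ^ n⁆ = ⁅t, d⁆ ^ n := by
  have hconj : ⁅t, d⁆ * d = t * d * t⁻¹ := by rw [commutatorElement_def]; group
  rw [commutatorElement_def, ← conj_pow, ← hconj, mul_pow_of_odd hn hc hd hdc,
    mul_inv_cancel_right]

/-! ### Commutators modulo a normal subgroup -/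

theorem commute_mk_iff {W : Subgroup G} [W.Normal] {x y : G} :
    Commute (x : G ⧸ W) (y : G ⧸ W) ↔ ⁅x, y⁆ ∈ W := by
  rw [← commutatorElement_eq_one_iff_commute, ← QuotientGroup.eq_one_iff]
  rfl

theorem mk_mul_pow_of_odd (hn : Odd n) {W : Subgroup G} [W.Normal] {x y : G}
    (hx : ⁅x, ⁅y, x⁆⁆ ∈ W) (hy : ⁅y, ⁅y, x⁆⁆ ∈ W) (hxy : ⁅y, x⁆ ^ n ∈ W) :
    (((x * y) ^ n : G) : G ⧸ W) = ((x ^ n * y ^ n : G) : G ⧸ W) :=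
  mul_pow_of_odd (x := (x : G ⧸ W)) (y := (y : G ⧸ W)) hn (commute_mk_iff.2 hx)
    (commute_mk_iff.2 hy) ((QuotientGroup.eq_one_iff _).2 hxy)

theorem commutatorElement_pow_right_mem_of_odd (hn : Odd n) {W : Subgroup G} [W.Normal] {t d : G}
    (hc : ⁅⁅t, d⁆, ⁅d, ⁅t, d⁆⁆⁆ ∈ W) (hd : ⁅d, ⁅d, ⁅t, d⁆⁆⁆ ∈ W) (hdc : ⁅d, ⁅t, d⁆⁆ ^ n ∈ W)
    (hcn : ⁅t, d⁆ ^ n ∈ W) : ⁅t, d ^ n⁆ ∈ W := by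
  have hpow : ⁅(t : G ⧸ W), (d : G ⧸ W) ^ n⁆ = ⁅(t : G ⧸ W), (d : G ⧸ W)⁆ ^ n :=
    commutatorElement_pow_right_of_odd hn (commute_mk_iff.2 hc) (commute_mk_iff.2 hd)
      ((QuotientGroup.eq_one_iff _).2 hdc)
  exact (QuotientGroup.eq_one_iff _).1 (hpow.trans ((QuotientGroup.eq_one_iff _).2 hcn))

theorem top_commutator_closure_le {S : Set G} {W : Subgroup G} [W.Normal]
    (h : ∀ g : G, ∀ s ∈ S, ⁅g, s⁆ ∈ W) : ⁅(⊤ : Subgroup G), closure S⁆ ≤ W := by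
  have hcent (x : G) : x ∈ (center (G ⧸ W)).comap (QuotientGroup.mk' W) ↔ ∀ g : G, ⁅g, x⁆ ∈ W := by
    simp only [mem_comap, mem_center_iff, QuotientGroup.mk'_apply, QuotientGroup.forall_mk,
      ← commute_iff_eq, commute_mk_iff]
  have hle := (closure_le _).2 fun s hs => (hcent s).2 fun g => h g s hs
  exact commutator_le.2 fun g _ x hx => (hcent x).1 (hle hx) g

theorem eq_bot_of_le_top_commutator [Group.IsNilpotent G] {M : Subgroup G}
    (h : M ≤ ⁅(⊤ : Subgroup G), M⁆) : M = ⊥ := by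
  have hle (k : ℕ) : M ≤ (⊤ : Subgroup G).lowerCentralSeries k := by
    induction k with
    | zero => exact le_top
    | succ k ih => exact h.trans ((commutator_comm _ _).trans_le (commutator_mono ih le_rfl))
  obtain ⟨k, hk⟩ := Subgroup.nilpotent_iff_lowerCentralSeries.1 ‹Group.IsNilpotent G›
  exact le_bot_iff.1 (hk ▸ hle k)

theorem le_of_le_sup_top_commutator [Group.IsNilpotent G] {M K : Subgroup G} [K.Normal]
    (h : M ≤ K ⊔ ⁅(⊤ : Subgroup G), M⁆) : M ≤ K := by
  have hmap : M.map (QuotientGroup.mk' K) ≤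
      ⁅(⊤ : Subgroup (G ⧸ K)), M.map (QuotientGroup.mk' K)⁆ := by
    refine (map_mono h).trans (le_of_eq ?_)
    rw [Subgroup.map_sup, map_commutator, QuotientGroup.map_mk'_self, bot_sup_eq,
      map_top_of_surjective _ (QuotientGroup.mk'_surjective K)]
  have hbot := eq_bot_of_le_top_commutator hmap
  rwa [Subgroup.map_eq_bot_iff, QuotientGroup.ker_mk'] at hbot

/-! ### The series of iterated powers -/

/-- The series `G ≥ G^n ≥ (G^n)^n ≥ ⋯`. Its `k`-th term agrees with `G^{n^k}` when `G` is powerful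
(`IsPowerful.powSeries_eq_subgroupPow`), but only the iterated form descends one step at a time
in general. -/
def powSeries (n : ℕ) (G : Type*) [Group G] : ℕ → Subgroup G
  | 0 => ⊤
  | k + 1 => subgroupPow (powSeries n G k) n

theorem closure_normal_of_conj_mem {S : Set G} (hS : ∀ s ∈ S, ∀ g : G, g * s * g⁻¹ ∈ S) :
    (closure S).Normal := by
  have hconj : Group.conjugatesOfSet S ⊆ S := by
    intro x hx
    obtain ⟨s, hs, hsx⟩ := Group.mem_conjugatesOfSet_iff.1 hx
    obtain ⟨g, rfl⟩ := isConj_iff.1 hsx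
    exact hS s hs g
  rw [← hconj.antisymm Group.subset_conjugatesOfSet]
  exact normalClosure_normal

instance subgroupPow_normal (N : Subgroup G) [hN : N.Normal] (n : ℕ) :
    (subgroupPow N n).Normal := by
  refine closure_normal_of_conj_mem ?_
  rintro _ ⟨y, hy, rfl⟩ g
  exact ⟨g * y * g⁻¹, hN.conj_mem y hy g, conj_pow⟩

instance powSeries_normal (n k : ℕ) : (powSeries n G k).Normal := by
  induction k with
  | zero => exact inferInstanceAs (⊤ : Subgroup G).Normal
  | succ k _ => exact subgroupPow_normal _ n

theorem powSeries_antitone (n : ℕ) (G : Type*) [Group G] : Antitone (powSeries n G) := by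
  refine antitone_nat_of_succ_le fun k => (closure_le _).2 ?_
  rintro _ ⟨y, hy, rfl⟩
  exact pow_mem hy n

theorem pow_mem_powSeries_succ {k : ℕ} {x : G} (hx : x ∈ powSeries n G k) :
    x ^ n ∈ powSeries n G (k + 1) :=
  subset_closure ⟨x, hx, rfl⟩

theorem pow_pow_mem_powSeries (x : G) (k : ℕ) : x ^ n ^ k ∈ powSeries n G k := by
  induction k with
  | zero => exact mem_top _
  | succ k ih => exact (pow_succ n k ▸ pow_mul x _ n) ▸ pow_mem_powSeries_succ ih

theorem subsingleton_of_subgroupPow_top_eq_top [Group.IsSolvable G] {e : ℕ}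
    (hexp : ∀ x : G, x ^ n ^ e = 1) (htop : subgroupPow (⊤ : Subgroup G) n = ⊤) :
    Subsingleton G := by
  have hof : Function.Surjective (Abelianization.of : G →* Abelianization G) :=
    QuotientGroup.mk_surjective
  have hrange : (powMonoidHom n : Abelianization G →* Abelianization G).range = ⊤ := by
    rw [eq_top_iff, ← map_top_of_surjective _ hof, ← htop, subgroupPow, MonoidHom.map_closure,
      closure_le]
    rintro _ ⟨_, ⟨x, -, rfl⟩, rfl⟩
    exact ⟨Abelianization.of x, (map_pow _ _ _).symm⟩
  have hroot : Function.Surjective fun a : Abelianization G => a ^ n ^ e := by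
    rw [← pow_iterate]
    exact (MonoidHom.range_eq_top.1 hrange).iterate e
  have hcomm : commutator G = ⊤ := by
    rw [← Abelianization.ker_of, eq_top_iff]
    intro x _
    obtain ⟨a, ha⟩ := hroot (Abelianization.of x)
    obtain ⟨y, rfl⟩ := hof a
    rw [MonoidHom.mem_ker, ← ha]
    exact (map_pow _ y _).symm.trans (by rw [hexp, map_one])
  by_contra hG
  have : Nontrivial G := not_subsingleton_iff_nontrivial.1 hG
  exact (Group.IsSolvable.commutator_lt_top_of_nontrivial G).ne hcomm

theorem eq_bot_of_le_subgroupPow [Group.IsSolvable G] {e : ℕ} (hexp : ∀ x : G, x ^ n ^ e = 1)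
    {N : Subgroup G} (h : N ≤ subgroupPow N n) : N = ⊥ := by
  have hmap : (⊤ : Subgroup N).map N.subtype ≤ (subgroupPow (⊤ : Subgroup N) n).map N.subtype := by
    rw [← MonoidHom.range_eq_map, range_subtype]
    refine h.trans ((closure_le _).2 ?_)
    rintro _ ⟨y, hy, rfl⟩
    exact ⟨⟨y, hy⟩ ^ n, subset_closure ⟨⟨y, hy⟩, mem_top _, rfl⟩, rfl⟩
  have htop := (map_le_map_iff_of_injective N.subtype_injective).1 hmap
  have := subsingleton_of_subgroupPow_top_eq_top (fun x : N => Subtype.ext (hexp x))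
    (top_le_iff.1 htop)
  exact eq_bot_of_subsingleton N

theorem exists_powSeries_eq_bot [Finite G] [Group.IsSolvable G] (hG : IsPGroup n G) :
    ∃ m, powSeries n G m = ⊥ := by
  obtain ⟨e, he⟩ := isPGroup_iff_exists_pow_pow_eq_one.1 hG
  obtain ⟨m, hm⟩ := WellFoundedLT.antitone_chain_condition (powSeries_antitone n G)
  exact ⟨m, eq_bot_of_le_subgroupPow he (hm (m + 1) m.le_succ).le⟩

namespace IsPowerful

theorem commutator_le_powSeries_one (hn : Odd n) (h : IsPowerful n G) :
    commutator G ≤ powSeries n G 1 := by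
  rwa [IsPowerful, if_neg (by rintro rfl; exact absurd hn (by decide))] at h

theorem of_commutatorElement_mem (hn : Odd n) (h : ∀ x y : G, ⁅x, y⁆ ∈ powSeries n G 1) :
    IsPowerful n G := by
  rw [IsPowerful, if_neg (by rintro rfl; exact absurd hn (by decide)), commutator_def]
  exact commutator_le.2 fun x _ y _ => h x y

theorem commutatorElement_mem_powSeries_one (hn : Odd n) (h : IsPowerful n G) (x y : G) :
    ⁅x, y⁆ ∈ powSeries n G 1 :=
  h.commutator_le_powSeries_one hn (commutator_mem_commutator (mem_top x) (mem_top y))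

theorem top_commutator_powSeries_le [Group.IsNilpotent G] (hn : Odd n) (h : IsPowerful n G)
    (k : ℕ) : ⁅(⊤ : Subgroup G), powSeries n G k⁆ ≤ powSeries n G (k + 1) := by
  induction k with
  | zero => exact h.commutator_le_powSeries_one hn
  | succ k ih =>
    refine le_of_le_sup_top_commutator (top_commutator_closure_le ?_)
    rintro t _ ⟨d, hd, rfl⟩
    have hc : ⁅t, d⁆ ∈ powSeries n G (k + 1) := ih (commutator_mem_commutator (mem_top t) hd)
    have hdc : ⁅d, ⁅t, d⁆⁆ ∈ ⁅(⊤ : Subgroup G), powSeries n G (k + 1)⁆ :=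
      commutator_mem_commutator (mem_top d) hc
    have hcen (y : G) : ⁅y, ⁅d, ⁅t, d⁆⁆⁆ ∈ ⁅⊤, ⁅(⊤ : Subgroup G), powSeries n G (k + 1)⁆⁆ :=
      commutator_mem_commutator (mem_top y) hdc
    exact commutatorElement_pow_right_mem_of_odd hn (mem_sup_right (hcen _))
      (mem_sup_right (hcen _))
      (mem_sup_left (pow_mem_powSeries_succ (commutator_le_right _ _ hdc)))
      (mem_sup_left (pow_mem_powSeries_succ hc))

theorem commutatorElement_mem_powSeries [Group.IsNilpotent G] (hn : Odd n) (h : IsPowerful n G)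
    {k : ℕ} {x : G} (hx : x ∈ powSeries n G k) (g : G) : ⁅g, x⁆ ∈ powSeries n G (k + 1) :=
  h.top_commutator_powSeries_le hn k (commutator_mem_commutator (mem_top g) hx)

theorem mk_mul_pow [Group.IsNilpotent G] (hn : Odd n) (h : IsPowerful n G) {k : ℕ} {y : G}
    (hy : y ∈ powSeries n G k) (x : G) :
    (((y * x) ^ n : G) : G ⧸ powSeries n G (k + 2)) = ((y ^ n * x ^ n : G) : G ⧸ _) := by
  have hxy := h.commutatorElement_mem_powSeries hn hy x
  exact mk_mul_pow_of_odd hn (h.commutatorElement_mem_powSeries hn hxy y)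
    (h.commutatorElement_mem_powSeries hn hxy x) (pow_mem_powSeries_succ hxy)

theorem exists_mk_pow_eq [Group.IsNilpotent G] (hn : Odd n) (h : IsPowerful n G) {k : ℕ} {w : G}
    (hw : w ∈ powSeries n G (k + 1)) :
    ∃ y ∈ powSeries n G k, ((y ^ n : G) : G ⧸ powSeries n G (k + 2)) = w := by
  induction hw using closure_induction with
  | mem _ hx => obtain ⟨y, hy, rfl⟩ := hx; exact ⟨y, hy, rfl⟩
  | one => exact ⟨1, one_mem _, by rw [one_pow]⟩
  | mul a b _ _ ha hb =>
    obtain ⟨x, hx, hxa⟩ := ha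
    obtain ⟨y, hy, hyb⟩ := hb
    refine ⟨x * y, mul_mem hx hy, ?_⟩
    rw [h.mk_mul_pow hn hx, QuotientGroup.mk_mul, hxa, hyb, QuotientGroup.mk_mul]
  | inv a _ ha =>
    obtain ⟨x, hx, hxa⟩ := ha
    exact ⟨x⁻¹, inv_mem hx, by rw [inv_pow, QuotientGroup.mk_inv, hxa, QuotientGroup.mk_inv]⟩

/-- The root is found by successive approximation along the series. -/
theorem exists_pow_eq [Group.IsNilpotent G] (hn : Odd n) (h : IsPowerful n G) {m : ℕ}
    (hbot : powSeries n G m = ⊥) {k : ℕ} {g : G} (hg : g ∈ powSeries n G (k + 1)) :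
    ∃ x ∈ powSeries n G k, x ^ n = g := by
  have happrox (l : ℕ) : ∃ x ∈ powSeries n G k, g / x ^ n ∈ powSeries n G (k + l + 1) := by
    induction l with
    | zero => exact ⟨1, one_mem _, by simpa using hg⟩
    | succ l ih =>
      obtain ⟨x, hx, hxg⟩ := ih
      obtain ⟨y, hy, hyg⟩ := h.exists_mk_pow_eq hn hxg
      refine ⟨y * x, mul_mem (powSeries_antitone n G (by omega) hy) hx, ?_⟩
      refine QuotientGroup.eq_iff_div_mem.1 (Eq.symm ?_)
      calc (((y * x) ^ n : G) : G ⧸ powSeries n G (k + l + 2))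
          = (y ^ n : G) * (x ^ n : G) := h.mk_mul_pow hn hy x
        _ = (g / x ^ n : G) * (x ^ n : G) := by rw [hyg]
        _ = g := by rw [← QuotientGroup.mk_mul, div_mul_cancel]
  obtain ⟨x, hx, hxg⟩ := happrox m
  have hgx : g / x ^ n ∈ powSeries n G m := powSeries_antitone n G (by omega) hxg
  rw [hbot, mem_bot, div_eq_one] at hgx
  exact ⟨x, hx, hgx.symm⟩

theorem exists_pow_pow_eq [Group.IsNilpotent G] (hn : Odd n) (h : IsPowerful n G) {m : ℕ}
    (hbot : powSeries n G m = ⊥) {k : ℕ} {g : G} (hg : g ∈ powSeries n G k) :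
    ∃ x : G, x ^ n ^ k = g := by
  induction k generalizing g with
  | zero => exact ⟨g, by rw [pow_zero, pow_one]⟩
  | succ k ih =>
    obtain ⟨y, hy, rfl⟩ := h.exists_pow_eq hn hbot hg
    obtain ⟨x, rfl⟩ := ih hy
    exact ⟨x, by rw [pow_succ, pow_mul]⟩

theorem powSeries_eq_subgroupPow [Group.IsNilpotent G] (hn : Odd n) (h : IsPowerful n G) {m : ℕ}
    (hbot : powSeries n G m = ⊥) (k : ℕ) :
    powSeries n G k = subgroupPow (⊤ : Subgroup G) (n ^ k) := by
  refine le_antisymm (fun g hg => ?_) ((closure_le _).2 ?_)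
  · obtain ⟨x, hx⟩ := h.exists_pow_pow_eq hn hbot hg
    exact subset_closure ⟨x, mem_top x, hx⟩
  · rintro _ ⟨x, -, rfl⟩
    exact pow_pow_mem_powSeries x k

theorem zpowers_eq_top_of_sup_eq_top [Group.IsNilpotent G] (hn : Odd n) (h : IsPowerful n G)
    {m : ℕ} (hbot : powSeries n G m = ⊥) {t : G} (ht : zpowers t ⊔ powSeries n G 1 = ⊤) :
    zpowers t = ⊤ := by
  have htop (k : ℕ) : zpowers t ⊔ powSeries n G k = ⊤ := by
    induction k with
    | zero => exact sup_top_eq _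
    | succ k ih =>
      refine top_le_iff.1 (ht.ge.trans (sup_le le_sup_left ((closure_le _).2 ?_)))
      rintro _ ⟨x, -, rfl⟩
      have hx : x ∈ powSeries n G k ⊔ zpowers t := by rw [sup_comm, ih]; exact mem_top x
      obtain ⟨w, hw, s, hs, rfl⟩ := mem_sup_of_normal_left.1 hx
      have hle : powSeries n G (k + 2) ≤ powSeries n G (k + 1) := powSeries_antitone n G (by omega)
      have hdiv := QuotientGroup.eq_iff_div_mem.1 (h.mk_mul_pow hn hw s)
      rw [← div_mul_cancel ((w * s) ^ n) (w ^ n * s ^ n)]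
      exact mul_mem (mem_sup_right (hle hdiv))
        (mul_mem (mem_sup_right (pow_mem_powSeries_succ hw)) (mem_sup_left (pow_mem hs n)))
  rw [← htop m, hbot, sup_bot_eq]

theorem commutatorElement_mem_powSeries_two [Group.IsNilpotent G] (hn : Odd n)
    (h : IsPowerful n G) {t x y : G} (hx : x ∈ zpowers t ⊔ powSeries n G 1)
    (hy : y ∈ zpowers t ⊔ powSeries n G 1) : ⁅x, y⁆ ∈ powSeries n G 2 := by
  have hcent {z : G} (hz : z ∈ powSeries n G 1) (g : G ⧸ powSeries n G 2) : Commute g z := by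
    induction g using QuotientGroup.induction_on with
    | H g => exact commute_mk_iff.2 (h.commutatorElement_mem_powSeries hn hz g)
  obtain ⟨_, ⟨a, rfl⟩, v, hv, rfl⟩ := mem_sup_of_normal_right.1 hx
  obtain ⟨_, ⟨b, rfl⟩, w, hw, rfl⟩ := mem_sup_of_normal_right.1 hy
  have hab : Commute ((t ^ a : G) : G ⧸ powSeries n G 2) (t ^ b : G) :=
    (Commute.refl (t : G ⧸ powSeries n G 2)).zpow_zpow a b
  exact commute_mk_iff.1 ((hab.mul_right (hcent hw _)).mul_left (hcent hv _).symm)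

theorem zpowers_sup_powSeries_one [Group.IsNilpotent G] (hn : Odd n) (h : IsPowerful n G) {m : ℕ}
    (hbot : powSeries n G m = ⊥) (t : G) :
    IsPowerful n (zpowers t ⊔ powSeries n G 1 : Subgroup G) := by
  refine of_commutatorElement_mem hn fun x y => ?_
  have hxy := h.commutatorElement_mem_powSeries_two hn x.2 y.2
  obtain ⟨z, hz, hzn⟩ := h.exists_pow_eq hn hbot hxy
  exact subset_closure ⟨⟨z, mem_sup_right hz⟩, mem_top _, Subtype.ext hzn⟩

end IsPowerful

/-! ### Elements of bounded order -/

theorem pow_pow_succ_eq_one_iff {i : ℕ} {x : G} : x ^ n ^ (i + 1) = 1 ↔ (x ^ n) ^ n ^ i = 1 := by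
  rw [pow_succ', pow_mul]

theorem pow_pow_eq_one_of_le {i j : ℕ} (hij : i ≤ j) {x : G} (hx : x ^ n ^ i = 1) :
    x ^ n ^ j = 1 :=
  orderOf_dvd_iff_pow_eq_one.1 ((orderOf_dvd_of_pow_eq_one hx).trans (pow_dvd_pow n hij))

theorem commutatorElement_pow_eq_one_comm {x y : G} : ⁅x, y⁆ ^ n = 1 ↔ ⁅y, x⁆ ^ n = 1 := by
  rw [← commutatorElement_inv, inv_pow, inv_eq_one]

theorem omegaSubgroup_mono {i j : ℕ} (hij : i ≤ j) {H K : Subgroup G} (hHK : H ≤ K) :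
    omegaSubgroup n i H ≤ omegaSubgroup n j K :=
  closure_mono fun _ hx => ⟨hHK hx.1, pow_pow_eq_one_of_le hij hx.2⟩

theorem mem_omegaSubgroup {i : ℕ} {H : Subgroup G} {x : G} (hx : x ∈ H) (hxi : x ^ n ^ i = 1) :
    x ∈ omegaSubgroup n i H :=
  subset_closure ⟨hx, hxi⟩

theorem omegaSubgroup_le (n i : ℕ) (H : Subgroup G) : omegaSubgroup n i H ≤ H :=
  (closure_le H).2 fun _ hx => hx.1

instance omegaSubgroup_normal (n i : ℕ) (N : Subgroup G) [hN : N.Normal] :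
    (omegaSubgroup n i N).Normal :=
  closure_normal_of_conj_mem fun x hx g =>
    ⟨hN.conj_mem x hx.1 g, by rw [conj_pow, hx.2, mul_one, mul_inv_cancel]⟩

theorem omegaSubgroup_le_map_subtype (n i : ℕ) (H : Subgroup G) :
    omegaSubgroup n i H ≤ (omegaSubgroup n i (⊤ : Subgroup H)).map H.subtype :=
  (closure_le _).2 fun x hx =>
    ⟨⟨x, hx.1⟩, mem_omegaSubgroup (mem_top _) (Subtype.ext hx.2), rfl⟩

/-- Every `Ω_i(H)` has exponent dividing `n ^ i`; equivalently, for each `i` the elements of `H` of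
order dividing `n ^ i` form a subgroup. -/
def OmegaBounded (n : ℕ) (H : Subgroup G) : Prop :=
  ∀ i, ∀ x ∈ omegaSubgroup n i H, x ^ n ^ i = 1

namespace OmegaBounded

theorem of_mul {H : Subgroup G} (h : ∀ i, ∀ x ∈ H, ∀ y ∈ H, x ^ n ^ i = 1 → y ^ n ^ i = 1 →
    (x * y) ^ n ^ i = 1) : OmegaBounded n H := by
  intro i x hx
  induction hx using closure_induction with
  | mem x hx => exact hx.2
  | one => exact one_pow _
  | mul x y hx hy hxi hyi =>
    exact h i x (omegaSubgroup_le n i H hx) y (omegaSubgroup_le n i H hy) hxi hyi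
  | inv x _ hx => rw [inv_pow, hx, inv_one]

theorem mul_pow_eq_one {H : Subgroup G} (h : OmegaBounded n H) {i : ℕ} {x y : G} (hx : x ∈ H)
    (hy : y ∈ H) (hxi : x ^ n ^ i = 1) (hyi : y ^ n ^ i = 1) : (x * y) ^ n ^ i = 1 :=
  h i _ (mul_mem (mem_omegaSubgroup hx hxi) (mem_omegaSubgroup hy hyi))

theorem mono {H K : Subgroup G} (hHK : H ≤ K) (h : OmegaBounded n K) : OmegaBounded n H :=
  fun i x hx => h i x (omegaSubgroup_mono le_rfl hHK hx)

theorem of_subtype {H : Subgroup G} (h : OmegaBounded n (⊤ : Subgroup H)) : OmegaBounded n H := by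
  intro i x hx
  obtain ⟨y, hy, rfl⟩ := omegaSubgroup_le_map_subtype n i H hx
  exact congrArg Subtype.val (h i y hy)

end OmegaBounded

namespace IsPowerful

theorem commutatorElement_pow_eq_one (hn : Odd n) (h : IsPowerful n G) {i : ℕ} {t : G}
    (hΩ : OmegaBounded n (zpowers t ⊔ powSeries n G 1)) (ht : t ^ n ^ i = 1) (g : G) :
    ⁅g, t⁆ ^ n ^ i = 1 := by
  have htH : t ∈ zpowers t ⊔ powSeries n G 1 := mem_sup_left (mem_zpowers t)
  have hconjH : g * t * g⁻¹ ∈ zpowers t ⊔ powSeries n G 1 := by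
    rw [show g * t * g⁻¹ = ⁅g, t⁆ * t by rw [commutatorElement_def]; group]
    exact mul_mem (mem_sup_right (h.commutatorElement_mem_powSeries_one hn g t)) htH
  rw [commutatorElement_def]
  exact hΩ.mul_pow_eq_one hconjH (inv_mem htH) (by rw [conj_pow, ht, mul_one, mul_inv_cancel])
    (by rw [inv_pow, ht, inv_one])

theorem commutatorElement_pow_right_pow_eq_one (hn : Odd n) (h : IsPowerful n G)
    (hΩ : OmegaBounded n (powSeries n G 1)) {i : ℕ} {t d : G} (hc : ⁅t, d⁆ ^ n ^ (i + 1) = 1)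
    (hdc : ⁅d, ⁅t, d⁆⁆ ^ n ^ (i + 1) = 1) (hcdc : ⁅⁅t, d⁆, ⁅d, ⁅t, d⁆⁆⁆ ^ n ^ i = 1)
    (hddc : ⁅d, ⁅d, ⁅t, d⁆⁆⁆ ^ n ^ i = 1) : ⁅t, d ^ n⁆ ^ n ^ i = 1 := by
  have hmem := h.commutatorElement_mem_powSeries_one hn
  refine hΩ i _ (commutatorElement_pow_right_mem_of_odd hn ?_ ?_ ?_ ?_)
  · exact mem_omegaSubgroup (hmem _ _) hcdc
  · exact mem_omegaSubgroup (hmem _ _) hddc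
  · exact mem_omegaSubgroup (pow_mem (hmem _ _) n) (pow_pow_succ_eq_one_iff.1 hdc)
  · exact mem_omegaSubgroup (pow_mem (hmem _ _) n) (pow_pow_succ_eq_one_iff.1 hc)

theorem commutatorElement_pow_eq_one_of_mem_powSeries [Group.IsNilpotent G] (hn : Odd n)
    (h : IsPowerful n G) {m : ℕ} (hbot : powSeries n G m = ⊥)
    (hΩ : ∀ t : G, OmegaBounded n (zpowers t ⊔ powSeries n G 1)) {i k : ℕ} {x t : G}
    (hx : x ∈ powSeries n G (k + 1)) (hxi : x ^ n ^ (i + 1) = 1) (ht : t ^ n ^ (i + k + 1) = 1) :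
    ⁅t, x⁆ ^ n ^ i = 1 := by
  -- The claim for `(i, k)` follows from `(i + 1, k - 1)` and `(i, k + 1)`, which both have a
  -- larger `2 * i + k`, and it is trivial once `i` or `k` reaches `m`.
  obtain ⟨s, hs⟩ : ∃ s, 3 * m ≤ 2 * i + k + s := ⟨3 * m, by omega⟩
  induction s generalizing i k x t with
  | zero =>
    rcases (by omega : m ≤ i ∨ m ≤ k + 1) with hmi | hmk
    · have hone := pow_pow_mem_powSeries (n := n) ⁅t, x⁆ m
      rw [hbot, mem_bot] at hone
      exact pow_pow_eq_one_of_le hmi hone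
    · have hone := powSeries_antitone n G hmk hx
      rw [hbot, mem_bot] at hone
      rw [hone, commutatorElement_one_right, one_pow]
  | succ s ih =>
    obtain ⟨d, hd, rfl⟩ := h.exists_pow_eq hn hbot hx
    rw [← pow_pow_succ_eq_one_iff] at hxi
    have hc : ⁅t, d⁆ ^ n ^ (i + 1) = 1 := by
      rcases k with _ | k
      · exact commutatorElement_pow_eq_one_comm.1 (h.commutatorElement_pow_eq_one hn (hΩ t) ht d)
      · exact ih hd hxi (by rwa [Nat.add_right_comm i 1 k]) (by omega)
    have hdc : ⁅d, ⁅t, d⁆⁆ ^ n ^ (i + 1) = 1 := h.commutatorElement_pow_eq_one hn (hΩ _) hc d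
    have hlow {y : G} (hy : y ^ n ^ (i + 2) = 1) : ⁅y, ⁅d, ⁅t, d⁆⁆⁆ ^ n ^ i = 1 :=
      ih (k := k + 1) (h.commutatorElement_mem_powSeries hn
        (h.commutatorElement_mem_powSeries hn hd t) d) hdc
        (pow_pow_eq_one_of_le (by omega) hy) (by omega)
    exact h.commutatorElement_pow_right_pow_eq_one hn ((hΩ 1).mono le_sup_right) hc hdc
      (hlow (pow_pow_eq_one_of_le (by omega) hc)) (hlow hxi)

theorem omegaBounded_top_of_zpowers_sup [Group.IsNilpotent G] (hn : Odd n) (h : IsPowerful n G)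
    {m : ℕ} (hbot : powSeries n G m = ⊥)
    (hΩ : ∀ t : G, OmegaBounded n (zpowers t ⊔ powSeries n G 1)) :
    OmegaBounded n (⊤ : Subgroup G) := by
  refine OmegaBounded.of_mul fun i => ?_
  induction i with
  | zero => intro x _ y _ hx hy; simp_all only [pow_zero, pow_one, mul_one]
  | succ i ih =>
    intro x _ y _ hx hy
    have hmem := h.commutatorElement_mem_powSeries_one hn
    have hc : ⁅y, x⁆ ^ n ^ (i + 1) = 1 := h.commutatorElement_pow_eq_one hn (hΩ x) hx y
    have hlow {z : G} (hz : z ^ n ^ (i + 1) = 1) :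
        ⁅z, ⁅y, x⁆⁆ ∈ omegaSubgroup n i (powSeries n G 1) :=
      mem_omegaSubgroup (hmem _ _) (h.commutatorElement_pow_eq_one_of_mem_powSeries hn hbot hΩ
        (k := 0) (hmem y x) hc hz)
    have hquot := mk_mul_pow_of_odd hn (hlow hx) (hlow hy)
      (mem_omegaSubgroup (pow_mem (hmem y x) n) (pow_pow_succ_eq_one_iff.1 hc))
    have hw := QuotientGroup.eq.1 hquot.symm
    rw [pow_pow_succ_eq_one_iff] at hx hy ⊢
    rw [← mul_inv_cancel_left (x ^ n * y ^ n) ((x * y) ^ n)]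
    exact (hΩ (x ^ n * y ^ n)).mul_pow_eq_one (mem_sup_left (mem_zpowers _))
      (mem_sup_right (omegaSubgroup_le n i _ hw)) (ih _ (mem_top _) _ (mem_top _) hx hy)
      ((hΩ 1).mono le_sup_right i _ hw)

theorem omegaBounded_top [Finite G] [Group.IsNilpotent G] (hn : Odd n) (hG : IsPGroup n G)
    (h : IsPowerful n G) : OmegaBounded n (⊤ : Subgroup G) := by
  induction hN : Nat.card G using Nat.strong_induction_on generalizing G with
  | _ N ih =>
    obtain ⟨m, hbot⟩ := exists_powSeries_eq_bot hG
    by_cases hcyc : ∃ t : G, zpowers t ⊔ powSeries n G 1 = ⊤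
    · obtain ⟨t, ht⟩ := hcyc
      have htop := h.zpowers_eq_top_of_sup_eq_top hn hbot ht
      have hcomm (x y : G) : Commute x y := by
        obtain ⟨a, rfl⟩ := mem_zpowers_iff.1 (htop ▸ mem_top x)
        obtain ⟨b, rfl⟩ := mem_zpowers_iff.1 (htop ▸ mem_top y)
        exact Commute.zpow_zpow_self t a b
      exact OmegaBounded.of_mul fun i x _ y _ hx hy => by rw [(hcomm x y).mul_pow, hx, hy, mul_one]
    · refine h.omegaBounded_top_of_zpowers_sup hn hbot fun t => OmegaBounded.of_subtype ?_
      have hlt := not_le.1 fun hle => hcyc ⟨t, eq_top_of_le_card _ hle⟩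
      exact ih _ (hN ▸ hlt) (hG.to_subgroup _) (h.zpowers_sup_powSeries_one hn hbot t) rfl

end IsPowerful

theorem omega_statement_12_general [Finite G] [Group.IsNilpotent G] (hn : Odd n)
    (hG : IsPGroup n G) (h : IsPowerful n G) (i j : ℕ) :
    ⁅omegaSubgroup n (i + j + 1) (⊤ : Subgroup G),
        omegaSubgroup n (i + 1) (subgroupPow (⊤ : Subgroup G) (n ^ (j + 1)))⁆ ≤
      subgroupPow (omegaSubgroup n (i + 1) (subgroupPow (⊤ : Subgroup G) (n ^ (j + 1)))) n := by
  obtain ⟨m, hbot⟩ := exists_powSeries_eq_bot hG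
  have hΩ := h.omegaBounded_top hn hG
  rw [← h.powSeries_eq_subgroupPow hn hbot, commutator_le]
  intro t ht x hx
  have hxP : x ∈ powSeries n G (j + 1) := omegaSubgroup_le n (i + 1) _ hx
  have hord : ⁅t, x⁆ ^ n ^ i = 1 :=
    h.commutatorElement_pow_eq_one_of_mem_powSeries hn hbot (fun _ => hΩ.mono le_top) hxP
      (hΩ.mono le_top _ x hx) (hΩ _ t ht)
  obtain ⟨z, hz, hzn⟩ := h.exists_pow_eq hn hbot (h.commutatorElement_mem_powSeries hn hxP t)
  have hzi : z ^ n ^ (i + 1) = 1 := pow_pow_succ_eq_one_iff.2 (hzn ▸ hord)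
  exact subset_closure ⟨z, mem_omegaSubgroup hz hzi, hzn⟩

end

theorem omega_statement_12 (p : ℕ) (hp : p.Prime) (hp2 : p ≠ 2) (G : Type*) [Group G]
    [Finite G] (hG : IsPGroup p G) (hpow : IsPowerful p G) (i j : ℕ) (hi : 1 ≤ i)
    (hj : 1 ≤ j) :
    ⁅omegaSubgroup p i (subgroupPow (⊤ : Subgroup G) (p ^ j)),
        omegaSubgroup p i (subgroupPow (⊤ : Subgroup G) (p ^ j))⁆ ≤
      subgroupPow (omegaSubgroup p i (subgroupPow (⊤ : Subgroup G) (p ^ j))) p := by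
  have : Fact p.Prime := ⟨hp⟩
  have : Group.IsNilpotent G := hG.isNilpotent
  obtain ⟨i, rfl⟩ := Nat.exists_eq_add_of_le' hi
  obtain ⟨j, rfl⟩ := Nat.exists_eq_add_of_le' hj
  exact (commutator_mono (omegaSubgroup_mono (by omega) le_top) le_rfl).trans
    (omega_statement_12_general (hp.odd_of_ne_two hp2) hG hpow i j)
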